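/- For each n > 0: given any 0^{(n-1)}-left-c.e. real α ∈ [0,1], one can effectively produce a Σ^0_n prefix-free set of binary strings S with μ(⟦S⟧) = α; and given any 0^{(n-1)}-right-c.e. real β ∈ [0,1], one can effectively produce a Π^0_n prefix-free set of binary strings of measure β. -/

import Mathlib

open scoped Classical
open MeasureTheory

namespace RandProb

/-- Cantor space: the space of infinite binary sequences. -/
abbrev Cantor := ℕ → Bool

/-! ### Oracle partial recursive functions, via codes -/

/-- Codes for partial recursive functions with access to an oracle `O : ℕ → ℕ`.
These codes play the role of (oracle) Turing machines. -/
inductive CodeO : Type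
  | zero : CodeO
  | succ : CodeO
  | left : CodeO
  | right : CodeO
  | oracle : CodeO
  | pair : CodeO → CodeO → CodeO
  | comp : CodeO → CodeO → CodeO
  | prec : CodeO → CodeO → CodeO
  | rfind' : CodeO → CodeO

/-- Evaluation of an oracle code with (total) oracle `O`. -/
def CodeO.eval (O : ℕ → ℕ) : CodeO → ℕ →. ℕ
  | .zero => pure 0
  | .succ => Nat.succ
  | .left => ↑fun n : ℕ => n.unpair.1
  | .right => ↑fun n : ℕ => n.unpair.2
  | .oracle => ↑fun n : ℕ => O n
  | .pair cf cg => fun n => Nat.pair <$> cf.eval O n <*> cg.eval O n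
  | .comp cf cg => fun n => cg.eval O n >>= cf.eval O
  | .prec cf cg =>
    Nat.unpaired fun a n =>
      n.rec (cf.eval O a) fun y IH => do
        let i ← IH
        cg.eval O (Nat.pair a (Nat.pair y i))
  | .rfind' cf =>
    Nat.unpaired fun a m =>
      (Nat.rfind fun n => (fun m => m = 0) <$> cf.eval O (Nat.pair a (n + m))).map (· + m)

/-- A canonical injective numbering of oracle codes. -/
def CodeO.encode : CodeO → ℕ
  | .zero => 0
  | .succ => 1
  | .left => 2
  | .right => 3
  | .oracle => 4
  | .pair cf cg => 2 * (2 * Nat.pair cf.encode cg.encode) + 5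
  | .comp cf cg => 2 * (2 * Nat.pair cf.encode cg.encode + 1) + 5
  | .prec cf cg => 2 * (2 * Nat.pair cf.encode cg.encode) + 6
  | .rfind' cf => 2 * (2 * cf.encode + 1) + 6

/-- The Turing jump of an oracle: the halting problem relative to `O`,
as a `{0,1}`-valued function. -/
noncomputable def jump (O : ℕ → ℕ) : ℕ → ℕ := fun e =>
  if ∃ c : CodeO, c.encode = e ∧ (c.eval O e).Dom then 1 else 0

/-- `iterJump n` is `∅^(n)`, the `n`-th iterate of the halting problem (as an oracle). -/
noncomputable def iterJump : ℕ → ℕ → ℕ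
  | 0 => fun _ => 0
  | n + 1 => jump (iterJump n)

/-- `S ⊆ ℕ` is computably enumerable relative to the oracle `O`. -/
def CeIn (O : ℕ → ℕ) (S : Set ℕ) : Prop := ∃ c : CodeO, S = {m | (c.eval O m).Dom}

/-- The left Dedekind cut of `α` (as a set of codes of rationals) is c.e. in `O`. -/
def LeftCeIn (O : ℕ → ℕ) (α : ℝ) : Prop :=
  CeIn O {m | ∃ q : ℚ, Encodable.encode q = m ∧ (q : ℝ) < α}

/-- The right Dedekind cut of `α` (as a set of codes of rationals) is c.e. in `O`. -/
def RightCeIn (O : ℕ → ℕ) (α : ℝ) : Prop :=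
  CeIn O {m | ∃ q : ℚ, Encodable.encode q = m ∧ α < (q : ℝ)}

/-! ### Martin-Löf randomness for real numbers -/

/-- The `i`-th component of a Martin-Löf test coded by the set `W ⊆ ℕ`:
the union of all open rational intervals whose codes are enumerated into the
`i`-th section of `W`. -/
def testSet (W : Set ℕ) (i : ℕ) : Set ℝ :=
  {x | ∃ p q : ℚ, Nat.pair i (Encodable.encode (p, q)) ∈ W ∧ (p : ℝ) < x ∧ x < (q : ℝ)}

/-- `α` is Martin-Löf random relative to the oracle `O`. -/
def MLRandomIn (O : ℕ → ℕ) (α : ℝ) : Prop :=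
  ∀ W : Set ℕ, CeIn O W →
    (∀ i, volume (testSet W i) ≤ ENNReal.ofReal ((2 : ℝ)⁻¹ ^ i)) →
    ∃ i, α ∉ testSet W i

/-- `α` is `n`-random: Martin-Löf random relative to `∅^(n-1)`. -/
def NRandom (n : ℕ) (α : ℝ) : Prop := MLRandomIn (iterJump (n - 1)) α

/-! ### The uniform measure on Cantor space -/

/-- The binary digits of a real number (meaningful on `[0,1)`). -/
noncomputable def digits (x : ℝ) : Cantor := fun n => decide (⌊x * 2 ^ (n + 1)⌋ % 2 = 1)

/-- The uniform (Lebesgue) product measure on Cantor space, obtained as the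
pushforward of Lebesgue measure on `[0,1)` under the binary-digit map. -/
noncomputable def mu : Measure Cantor :=
  Measure.map digits (volume.restrict (Set.Ico (0 : ℝ) 1))

/-- The uniform measure of a set of elements of Cantor space, as a real number. -/
noncomputable def muR (S : Set Cantor) : ℝ := (mu S).toReal

/-! ### Strings, prefixes and cylinders -/

/-- The length-`n` initial segment of `X ∈ 2^ω`, as a finite binary string. -/
def initSeg (X : Cantor) (n : ℕ) : List Bool := (List.range n).map X

/-- `⟦S⟧`: the elements of Cantor space having a prefix in the set of strings `S`. -/
def cyl (S : Set (List Bool)) : Set Cantor := {X | ∃ n, initSeg X n ∈ S}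

/-- A set of strings is prefix-free if none of its elements properly extends another. -/
def IsPrefixFree (S : Set (List Bool)) : Prop := ∀ σ ∈ S, ∀ τ ∈ S, σ <+: τ → σ = τ

/-- A set of strings is upward closed if it is closed under taking extensions. -/
def UpClosed (S : Set (List Bool)) : Prop := ∀ σ ∈ S, ∀ τ, σ <+: τ → τ ∈ S

/-- Two strings are compatible if one is a prefix of the other. -/
def Compatible (σ τ : List Bool) : Prop := σ <+: τ ∨ τ <+: σ

/-! ### Oracle machines -/

/-- An element of Cantor space viewed as a `{0,1}`-valued oracle. -/
def oX (X : Cantor) : ℕ → ℕ := fun n => cond (X n) 1 0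

/-- `evalO X c n`: the (possibly divergent) output of the oracle machine `c`
on input `n` with oracle `X`. -/
def evalO (X : Cantor) (c : CodeO) (n : ℕ) : Part ℕ := c.eval (oX X) n

/-- The oracle obtained by writing the string `ρ` before the bits of `X`. -/
def prepend (ρ : List Bool) (X : Cantor) : Cantor := fun n =>
  if n < ρ.length then ρ.getD n false else X (n - ρ.length)

/-- `X ∈ 2^ω` extends the finite string `ρ`. -/
def Extends (X : Cantor) (ρ : List Bool) : Prop := initSeg X ρ.length = ρ

/-- `u` is a universal oracle machine: some effective, prefix-free translation
`c ↦ σ_c` satisfies `u(σ_c * X, n) ≃ c(X, n)` for all machines `c`. -/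
def UniversalOM (u : CodeO) : Prop :=
  ∃ σ : CodeO → List Bool,
    (∃ f : ℕ → ℕ, Computable f ∧ ∀ c : CodeO, f c.encode = Encodable.encode (σ c)) ∧
    IsPrefixFree (Set.range σ) ∧
    ∀ (c : CodeO) (X : Cantor) (n : ℕ), evalO (prepend (σ c) X) u n = evalO X c n

/-- `TOT(c)`: the oracles `X` such that the function `c(X)` is total. -/
def TOT (c : CodeO) : Set Cantor := {X | ∀ n, (evalO X c n).Dom}

/-- The domain of the partial function `c(X)`. -/
def domSet (c : CodeO) (X : Cantor) : Set ℕ := {n | (evalO X c n).Dom}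

/-- The range of the partial function `c(X)`. -/
def ranSet (c : CodeO) (X : Cantor) : Set ℕ := {v | ∃ n, v ∈ evalO X c n}

/-- `INF(c)`: the oracles `X` such that `c(X)` has infinite domain. -/
def INF (c : CodeO) : Set Cantor := {X | (domSet c X).Infinite}

/-- `COF(c)`: the oracles `X` such that `c(X)` has cofinite domain. -/
def COF (c : CodeO) : Set Cantor := {X | (domSet c X)ᶜ.Finite}

/-- `COM(c)`: the oracles `X` such that `c(X)` has computable domain. -/
def COM (c : CodeO) : Set Cantor := {X | ComputablePred fun n => n ∈ domSet c X}

/-- The characteristic function of a set of naturals. -/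
noncomputable def chi (A : Set ℕ) : ℕ → ℕ := fun n => if n ∈ A then 1 else 0

/-- Turing reducibility between sets of naturals. -/
def TuringLEs (B A : Set ℕ) : Prop := ∃ c : CodeO, ∀ n, c.eval (chi A) n = Part.some (chi B n)

/-- The halting problem `∅'` as a set of naturals. -/
noncomputable def HaltingSet : Set ℕ := {e | iterJump 1 e = 1}

/-- `COMPL(c)`: the oracles `X` such that the domain of `c(X)` computes the halting problem. -/
noncomputable def COMPL (c : CodeO) : Set Cantor := {X | TuringLEs HaltingSet (domSet c X)}

/-- Turing reducibility between total functions on ℕ. -/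
def TuringLEf (f g : ℕ → ℕ) : Prop := ∃ c : CodeO, ∀ n, c.eval g n = Part.some (f n)

/-- A real number viewed as an oracle, via its binary expansion. -/
noncomputable def realOracle (α : ℝ) : ℕ → ℕ := oX (digits α)

/-- Two reals have Turing-incomparable degrees. -/
noncomputable def TIncompReal (α β : ℝ) : Prop :=
  ¬ TuringLEf (realOracle α) (realOracle β) ∧ ¬ TuringLEf (realOracle β) (realOracle α)

/-! ### Arithmetical hierarchy -/

/-- Evaluation with the trivial (empty) oracle: ordinary partial recursion. -/
def eval0 (c : CodeO) : ℕ →. ℕ := c.eval fun _ => 0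

/-- `SigmaNumIdx n c` is the `Σ^0_{n+1}` subset of `ℕ` with index `c`. -/
def SigmaNumIdx : ℕ → CodeO → Set ℕ
  | 0, c => {m | (eval0 c m).Dom}
  | n + 1, c => {m | ∃ k, Nat.pair m k ∉ SigmaNumIdx n c}

/-- `S ⊆ ℕ` is `Σ^0_n` (intended for `n ≥ 1`). -/
def SigmaN (n : ℕ) (S : Set ℕ) : Prop := ∃ c : CodeO, S = SigmaNumIdx (n - 1) c

/-- The set of codes of the elements of a set of binary strings. -/
def strCodes (S : Set (List Bool)) : Set ℕ := {m | ∃ σ ∈ S, Encodable.encode σ = m}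

/-- A set of binary strings is `Σ^0_n`. -/
def SigmaStr (n : ℕ) (S : Set (List Bool)) : Prop := SigmaN n (strCodes S)

/-- A set of binary strings is `Π^0_n`: its complement is `Σ^0_n`. -/
def PiStr (n : ℕ) (S : Set (List Bool)) : Prop := SigmaStr n Sᶜ

/-- A set of binary strings is c.e. relative to the oracle `O`. -/
def CeStrIn (O : ℕ → ℕ) (S : Set (List Bool)) : Prop := CeIn O (strCodes S)

/-- `SigmaClassIdx n c m` is the `Σ^0_{n+1}` class of elements of Cantor space
with index `c` and parameter `m`. -/
def SigmaClassIdx : ℕ → CodeO → ℕ → Set Cantor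
  | 0, c, m => {X | (evalO X c m).Dom}
  | n + 1, c, m => {X | ∃ k, X ∉ SigmaClassIdx n c (Nat.pair m k)}

/-! ### Monotone machines -/

/-- A monotone machine: a partial computable, monotone map on finite binary strings. -/
structure MonoMachine where
  f : List Bool →. List Bool
  partrec : Partrec f
  mono : ∀ ⦃σ τ a b : List Bool⦄, σ <+: τ → a ∈ f σ → b ∈ f τ → a <+: b

/-- The oracles `X` such that the output of the monotone machine on `X` is infinite. -/
def MonoINF (M : MonoMachine) : Set Cantor :=
  {X | ∀ k, ∃ n a, a ∈ M.f (initSeg X n) ∧ k ≤ a.length}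

/-- The `k`-th bit of the output `M(X)` of a monotone machine is `b`. -/
def MonoMachine.hasBit (M : MonoMachine) (X : Cantor) (k : ℕ) (b : Bool) : Prop :=
  ∃ n a, a ∈ M.f (initSeg X n) ∧ a[k]? = some b

/-- `U` is a universal monotone machine. -/
def UniversalMono (U : MonoMachine) : Prop :=
  ∃ (M : ℕ → MonoMachine) (σ : ℕ → List Bool),
    Partrec₂ (fun (e : ℕ) (τ : List Bool) => (M e).f τ) ∧
    (∀ V : MonoMachine, ∃ e, (M e).f = V.f) ∧
    Computable σ ∧ IsPrefixFree (Set.range σ) ∧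
    ∀ e τ, U.f (σ e ++ τ) = (M e).f τ

/-! ### Infinitary self-delimiting machines -/

/-- Chaitin's infinitary self-delimiting machines: `f σ n` is the `n`-th approximation
of the output on program `σ` (`none` meaning divergence); the convergence relation is
decidable, approximations are monotone, and machines are self-delimiting. -/
structure InfMachine where
  f : List Bool → ℕ → Option (List Bool)
  computable : Computable₂ f
  mono : ∀ σ m n a, n < m → f σ m = some a → ∃ b, f σ n = some b ∧ b <+: a
  sd : ∀ σ τ n a, f σ n = some a → f (σ ++ τ) n = some a

/-- `M^∞(σ)↓`: all approximations converge. -/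
def InfMachine.domInf (M : InfMachine) (σ : List Bool) : Prop := ∀ n, M.f σ n ≠ none

/-- The domain of `M^∞`. -/
def InfMachine.DOM (M : InfMachine) : Set (List Bool) := {σ | M.domInf σ}

/-- The output `M^∞(σ)` is infinite (a stream). -/
def InfMachine.outInf (M : InfMachine) (σ : List Bool) : Prop :=
  ∀ k, ∃ n a, M.f σ n = some a ∧ k ≤ a.length

/-- `FIN(M^∞)`: programs in the domain with finite output. -/
def InfMachine.FIN (M : InfMachine) : Set (List Bool) := {σ | M.domInf σ ∧ ¬ M.outInf σ}

/-- `INF(M^∞)`: programs in the domain with infinite output. -/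
def InfMachine.INF (M : InfMachine) : Set (List Bool) := {σ | M.domInf σ ∧ M.outInf σ}

/-- The `k`-th bit of the output `M^∞(σ)` is `b`. -/
def InfMachine.hasBit (M : InfMachine) (σ : List Bool) (k : ℕ) (b : Bool) : Prop :=
  ∃ n a, M.f σ n = some a ∧ a[k]? = some b

/-- The domain of the prefix-free machine `M^*`: minimal strings in the domain of `M^∞`. -/
def InfMachine.DOMstar (M : InfMachine) : Set (List Bool) :=
  {σ | M.domInf σ ∧ ∀ τ, τ <+: σ → τ ≠ σ → ¬ M.domInf τ}

/-- Programs whose output is a stream with a tail of 1s. -/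
def InfMachine.COFout (M : InfMachine) : Set (List Bool) :=
  {σ | M.domInf σ ∧ M.outInf σ ∧ ∃ t, ∀ k, t ≤ k → M.hasBit σ k true}

/-- `A^∞(σ) ≃ B^∞(τ)`: both converge or both diverge, with equal outputs. -/
def InfAgree (A : InfMachine) (σ : List Bool) (B : InfMachine) (τ : List Bool) : Prop :=
  (A.domInf σ ↔ B.domInf τ) ∧ (A.domInf σ → ∀ k b, (A.hasBit σ k b ↔ B.hasBit τ k b))

/-- `U` is a universal infinitary self-delimiting machine. -/
def UniversalInf (U : InfMachine) : Prop :=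
  ∃ (M : ℕ → InfMachine) (σ : ℕ → List Bool),
    Computable (fun p : ℕ × List Bool × ℕ => (M p.1).f p.2.1 p.2.2) ∧
    (∀ V : InfMachine, ∃ e, ∀ τ, InfAgree (M e) τ V τ) ∧
    Computable σ ∧ IsPrefixFree (Set.range σ) ∧
    ∀ e τ, InfAgree U (σ e ++ τ) (M e) τ

end RandProb

namespace RandProb

/-!
The binary expansion of `x ∈ [0,1)` begins with `σ` exactly when `x` lies in the dyadic interval of
`σ`, and the right end points of the intervals around `x` decrease to `x` without reaching it. Hence
both `{σ | rightEnd σ < α}` and `{σ | rightEnd σ ≤ α}` generate the class of the `x < α`, of measure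
`α`. From an enumeration, relative to the jump, of the left cut of `α` the first set is enumerated;
from an enumeration of the right cut, the complement of the second. Both sets have to be thinned out
to prefix-free ones without raising their complexity.

On the left, let the strings `σ` whose membership is witnessed within `|σ|` steps represent the set:
this condition is decidable, so its minimal strings form a prefix-free set decidable in the jump. On
the right, a string minimal outside an enumerated set `⋃ s, U s` has all its proper prefixes in some
stage `U s`, a `Σ` condition which bounds no quantifier; extending the string to a length bounding
the stage makes that condition decidable and leaves a `Π` condition.

Sets enumerable in an iterated jump are turned into sets with indices in the arithmetical hierarchy,
uniformly and with a primitive recursive translation of indices, by approximating the jumps in the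
limit.
-/

open Nat.Partrec (Code)
open Filter

section OracleCodes

theorem CodeO.encode_injective : Function.Injective CodeO.encode := by
  intro c d h
  induction c generalizing d <;> cases d <;> simp only [CodeO.encode] at h <;> try omega
  all_goals grind [Nat.pair_eq_pair]

theorem CodeO.encode_surjective : Function.Surjective CodeO.encode := by
  intro n
  induction n using Nat.strong_induction_on with | _ n ih
  by_cases hn : n < 5
  · interval_cases n
    exacts [⟨.zero, rfl⟩, ⟨.succ, rfl⟩, ⟨.left, rfl⟩, ⟨.right, rfl⟩, ⟨.oracle, rfl⟩]
  obtain ⟨a, ha⟩ := ih ((n - 5) / 4).unpair.1 ((Nat.unpair_left_le _).trans_lt (by omega))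
  obtain ⟨b, hb⟩ := ih ((n - 5) / 4).unpair.2 ((Nat.unpair_right_le _).trans_lt (by omega))
  obtain ⟨c, hc⟩ := ih ((n - 5) / 4) (by omega)
  have hab : Nat.pair a.encode b.encode = (n - 5) / 4 := by rw [ha, hb, Nat.pair_unpair]
  have hmod : (n - 5) % 4 < 4 := Nat.mod_lt _ (by omega)
  interval_cases hr : (n - 5) % 4
  exacts [⟨.pair a b, by simp only [CodeO.encode]; omega⟩,
    ⟨.prec a b, by simp only [CodeO.encode]; omega⟩,
    ⟨.comp a b, by simp only [CodeO.encode]; omega⟩,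
    ⟨.rfind' c, by simp only [CodeO.encode]; omega⟩]

noncomputable instance : Denumerable CodeO :=
  Denumerable.mk' (Equiv.ofBijective CodeO.encode ⟨CodeO.encode_injective, CodeO.encode_surjective⟩)

theorem CodeO.encode_eq (c : CodeO) : Encodable.encode c = c.encode := rfl

/-- The ordinary code obtained from an oracle code by answering every oracle query with `o`. -/
def CodeO.subst (o : Code) : CodeO → Code
  | .zero => .zero
  | .succ => .succ
  | .left => .left
  | .right => .right
  | .oracle => o
  | .pair a b => .pair (a.subst o) (b.subst o)
  | .comp a b => .comp (a.subst o) (b.subst o)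
  | .prec a b => .prec (a.subst o) (b.subst o)
  | .rfind' a => .rfind' (a.subst o)

/-- An ordinary code, viewed as an oracle code that never queries its oracle. -/
def CodeO.ofCode : Code → CodeO
  | .zero => .zero
  | .succ => .succ
  | .left => .left
  | .right => .right
  | .pair a b => .pair (ofCode a) (ofCode b)
  | .comp a b => .comp (ofCode a) (ofCode b)
  | .prec a b => .prec (ofCode a) (ofCode b)
  | .rfind' a => .rfind' (ofCode a)

theorem CodeO.eval_ofCode (O : ℕ → ℕ) (c : Code) : (CodeO.ofCode c).eval O = c.eval := by
  induction c <;> simp_all [CodeO.ofCode, CodeO.eval, Code.eval] <;> rfl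

theorem mem_rfind'_iff {f : ℕ →. ℕ} {m v : ℕ} :
    v ∈ Nat.unpaired (fun a m =>
      (Nat.rfind fun n => (fun m => m = 0) <$> f (Nat.pair a (n + m))).map (· + m)) m ↔
    ∃ w, (0 ∈ f (Nat.pair m.unpair.1 (w + m.unpair.2)) ∧
      ∀ k < w, ∃ y ∈ f (Nat.pair m.unpair.1 (k + m.unpair.2)), y ≠ 0) ∧ w + m.unpair.2 = v := by
  simp only [Nat.unpaired, Part.mem_map_iff]
  refine exists_congr fun w => and_congr_left' (Nat.mem_rfind.trans ?_)
  simp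

theorem CodeO.mem_eval_of_mem_eval_subst {O : ℕ → ℕ} {o : Code}
    (ho : ∀ i, ∀ v ∈ o.eval i, v = O i) (c : CodeO) :
    ∀ {m v}, v ∈ (c.subst o).eval m → v ∈ c.eval O m := by
  induction c with
  | zero | succ | left | right => exact id
  | oracle => exact fun h => Part.mem_some_iff.2 (ho _ _ h)
  | pair a b iha ihb =>
    intro m v
    simp only [subst, CodeO.eval, Code.eval, Seq.seq, Part.mem_bind_iff, Part.map_eq_map,
      Part.mem_map_iff]
    rintro ⟨_, ⟨x, hx, rfl⟩, y, hy, rfl⟩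
    exact ⟨_, ⟨x, iha hx, rfl⟩, y, ihb hy, rfl⟩
  | comp a b iha ihb =>
    intro m v hv
    obtain ⟨x, hx, hv⟩ := Part.mem_bind_iff.1 hv
    exact Part.mem_bind_iff.2 ⟨x, ihb hx, iha hv⟩
  | prec a b iha ihb =>
    intro m
    simp only [subst, CodeO.eval, Code.eval, Nat.unpaired]
    induction m.unpair.2 with
    | zero => exact iha
    | succ n ih =>
      intro v hv
      obtain ⟨x, hx, hv⟩ := Part.mem_bind_iff.1 hv
      exact Part.mem_bind_iff.2 ⟨x, ih hx, ihb hv⟩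
  | rfind' a iha =>
    intro m v hv
    obtain ⟨w, ⟨h0, hlt⟩, rfl⟩ := mem_rfind'_iff.1 hv
    exact mem_rfind'_iff.2
      ⟨w, ⟨iha h0, fun k hk => (hlt k hk).imp fun y hy => ⟨iha hy.1, hy.2⟩⟩, rfl⟩

/-- The use principle: a convergent computation queries its oracle at finitely many points only. -/
theorem CodeO.eventually_mem_eval_subst {O : ℕ → ℕ} {o : ℕ → Code}
    (ho : ∀ i, ∀ᶠ k in atTop, O i ∈ (o k).eval i) (c : CodeO) :
    ∀ {m v}, v ∈ c.eval O m → ∀ᶠ k in atTop, v ∈ (c.subst (o k)).eval m := by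
  induction c with
  | zero | succ | left | right => exact fun h => .of_forall fun _ => h
  | oracle =>
    intro m v h
    rw [Part.mem_some_iff.1 h]
    exact ho m
  | pair a b iha ihb =>
    intro m v
    simp only [subst, CodeO.eval, Code.eval, Seq.seq, Part.mem_bind_iff, Part.map_eq_map,
      Part.mem_map_iff]
    rintro ⟨_, ⟨x, hx, rfl⟩, y, hy, rfl⟩
    filter_upwards [iha hx, ihb hy] with k hx hy
    exact ⟨_, ⟨x, hx, rfl⟩, y, hy, rfl⟩
  | comp a b iha ihb =>
    intro m v hv
    obtain ⟨x, hx, hv⟩ := Part.mem_bind_iff.1 hv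
    filter_upwards [ihb hx, iha hv] with k hx hv using Part.mem_bind_iff.2 ⟨x, hx, hv⟩
  | prec a b iha ihb =>
    intro m
    simp only [subst, CodeO.eval, Code.eval, Nat.unpaired]
    induction m.unpair.2 with
    | zero => exact iha
    | succ n ih =>
      intro v hv
      obtain ⟨x, hx, hv⟩ := Part.mem_bind_iff.1 hv
      filter_upwards [ih hx, ihb hv] with k hx hv using Part.mem_bind_iff.2 ⟨x, hx, hv⟩
  | rfind' a iha =>
    intro m v hv
    obtain ⟨w, ⟨h0, hlt⟩, rfl⟩ := mem_rfind'_iff.1 hv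
    choose! y hy hy0 using hlt
    have hlt := (Set.finite_lt_nat w).eventually_all.2 fun i hi => iha (hy i hi)
    filter_upwards [iha h0, hlt] with k h0 hlt
    exact mem_rfind'_iff.2 ⟨w, ⟨h0, fun i hi => ⟨y i, hlt i hi, hy0 i hi⟩⟩, rfl⟩

/-- The course-of-values recursion step for `CodeO.subst`: the value at the code with number
`l.length`, from the list `l` of the values at all smaller numbers. The case distinction inverts
`CodeO.encode`. -/
def substStep (o : Code) (l : List Code) : Code :=
  let n := l.length - 5
  let m := n.div2.div2
  let s := l.getD m .zero
  let s₁ := l.getD m.unpair.1 .zero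
  let s₂ := l.getD m.unpair.2 .zero
  [.zero, .succ, .left, .right, o].getD l.length <|
    cond n.bodd (cond n.div2.bodd (.rfind' s) (.prec s₁ s₂))
      (cond n.div2.bodd (.comp s₁ s₂) (.pair s₁ s₂))

theorem primrec₂_substStep : Primrec₂ substStep := by
  have len : Primrec fun p : Code × List Code => p.2.length := Primrec.list_length.comp Primrec.snd
  have n := Primrec.nat_sub.comp len (Primrec.const 5)
  have m := Primrec.nat_div2.comp (Primrec.nat_div2.comp n)
  have code {f : Code × List Code → ℕ} (hf : Primrec f) :
      Primrec fun p : Code × List Code => p.2.getD (f p) Code.zero :=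
    (Primrec.list_getD _).comp Primrec.snd hf
  have s₁ := code (Primrec.fst.comp (Primrec.unpair.comp m))
  have s₂ := code (Primrec.snd.comp (Primrec.unpair.comp m))
  have hi := Primrec.nat_bodd.comp (Primrec.nat_div2.comp n)
  have cons := Primrec.list_cons (α := Code)
  have base : Primrec fun p : Code × List Code => [Code.zero, .succ, .left, .right, p.1] :=
    cons.comp (.const _) <| cons.comp (.const _) <| cons.comp (.const _) <|
      cons.comp (.const _) <| cons.comp Primrec.fst (.const _)
  refine (Primrec.option_getD.comp (Primrec.list_getElem?.comp base len) <|
    .cond (Primrec.nat_bodd.comp n)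
      (.cond hi (Code.primrec_rfind'.comp (code m)) (Code.primrec₂_prec.comp s₁ s₂))
      (.cond hi (Code.primrec₂_comp.comp s₁ s₂) (Code.primrec₂_pair.comp s₁ s₂))).of_eq fun p => ?_
  simp only [substStep, List.getD_eq_getElem?_getD]

theorem substStep_eq_subst (o : Code) (c : CodeO) :
    substStep o ((List.range c.encode).map fun n => (Denumerable.ofNat CodeO n).subst o) =
      c.subst o := by
  have hget {n : ℕ} {a : CodeO} (h : a.encode < n) :
      ((List.range n)[a.encode]?.map fun n => (Denumerable.ofNat CodeO n).subst o) =
        some (a.subst o) := by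
    rw [List.getElem?_range h, Option.map_some, ← CodeO.encode_eq, Denumerable.ofNat_encode]
  cases c with
  | zero | succ | left | right | oracle => rfl
  | pair a b | comp a b | prec a b =>
    have := Nat.left_le_pair a.encode b.encode
    have := Nat.right_le_pair a.encode b.encode
    simp (disch := omega) [CodeO.encode, substStep, CodeO.subst, Nat.div2_val, hget]
  | rfind' a =>
    simp (disch := omega) [CodeO.encode, substStep, CodeO.subst, Nat.div2_val, hget]

theorem CodeO.primrec₂_subst : Primrec₂ CodeO.subst := by
  have hf : Primrec₂ fun o n => (Denumerable.ofNat CodeO n).subst o := by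
    refine Primrec.nat_strong_rec _ (Primrec.option_some.comp₂ primrec₂_substStep) fun o n =>
      congrArg some ?_
    simpa [← CodeO.encode_eq] using substStep_eq_subst o (Denumerable.ofNat CodeO n)
  exact (hf.comp Primrec.fst (Primrec.encode.comp Primrec.snd)).of_eq fun p => by simp

/-- The initial segment of length `w` of a sequence, used for oracles and for elements of Cantor
space. -/
def seg {α : Type*} (O : ℕ → α) (w : ℕ) : List α := (List.range w).map O

@[simp] theorem length_seg {α : Type*} (O : ℕ → α) (w : ℕ) : (seg O w).length = w := by simp [seg]

theorem take_seg {α : Type*} (O : ℕ → α) {k w : ℕ} (h : k ≤ w) : (seg O w).take k = seg O k := by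
  simp [seg, ← List.map_take, List.take_range, h]

theorem seg_succ {α : Type*} (O : ℕ → α) (w : ℕ) : seg O (w + 1) = seg O w ++ [O w] := by
  simp [seg, List.range_succ]

theorem seg_prefix_seg {α : Type*} (O : ℕ → α) {k w : ℕ} (h : k ≤ w) : seg O k <+: seg O w :=
  take_seg O h ▸ List.take_prefix _ _

theorem mem_seg_getElem?_iff {O : ℕ → ℕ} {k i v : ℕ} : v ∈ (seg O k)[i]? ↔ i < k ∧ v = O i := by
  by_cases h : i < k <;> simp [seg, h, eq_comm]

theorem exists_primrec_getElem?_code : ∃ lookup : List ℕ → Code, Primrec lookup ∧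
    ∀ L i, (lookup L).eval i = (L[i]? : Part ℕ) := by
  have h : Partrec fun p : List ℕ × ℕ => (p.1[p.2]? : Part ℕ) :=
    Computable.ofOption (Primrec.list_getElem?.comp Primrec.fst Primrec.snd).to_comp
  obtain ⟨c, hc⟩ := Code.exists_code.1 h
  refine ⟨fun L => c.curry (Encodable.encode L),
    Code.primrec₂_curry.comp (Primrec.const _) Primrec.encode, fun L i => ?_⟩
  simp [Code.eval_curry, hc, Part.map_id']

/-- A code of the partial function `i ↦ L[i]?`, which answers the queries to an oracle of which only
the finite initial segment `L` is known. -/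
noncomputable def lookup : List ℕ → Code := exists_primrec_getElem?_code.choose

theorem primrec_lookup : Primrec lookup := exists_primrec_getElem?_code.choose_spec.1

theorem eval_lookup (L : List ℕ) (i : ℕ) : (lookup L).eval i = (L[i]? : Part ℕ) :=
  exists_primrec_getElem?_code.choose_spec.2 L i

/-- The computation of `c` on input `m` halts within `L.length` steps, with oracle queries answered
from the initial segment `L` of the oracle. Truncations of `L` are allowed in order to make this
monotone in `L`. -/
def HaltsWithin (c : CodeO) (m : ℕ) (L : List ℕ) : Prop :=
  ∃ k ≤ L.length, ∃ s ≤ L.length, (Code.evaln s (c.subst (lookup (L.take k))) m).isSome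

theorem HaltsWithin.mono {c : CodeO} {m : ℕ} {L L' : List ℕ} (h : HaltsWithin c m L)
    (hL : L <+: L') : HaltsWithin c m L' := by
  obtain ⟨k, hk, s, hs, h⟩ := h
  refine ⟨k, hk.trans hL.length_le, s, hs.trans hL.length_le, ?_⟩
  obtain ⟨T, rfl⟩ := hL
  rwa [List.take_append_of_le_length hk]

theorem dom_iff_exists_haltsWithin (O : ℕ → ℕ) (c : CodeO) (m : ℕ) :
    (c.eval O m).Dom ↔ ∃ w, HaltsWithin c m (seg O w) := by
  constructor
  · intro h
    have hO (i : ℕ) : ∀ᶠ k in atTop, O i ∈ (lookup (seg O k)).eval i := by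
      filter_upwards [eventually_gt_atTop i] with k hk
      simpa [eval_lookup] using mem_seg_getElem?_iff.2 ⟨hk, rfl⟩
    obtain ⟨k, hk⟩ := (c.eventually_mem_eval_subst hO (Part.get_mem h)).exists
    obtain ⟨s, hs⟩ := Code.evaln_complete.1 hk
    refine ⟨max k s, k, by simp, s, by simp, ?_⟩
    rw [take_seg O (le_max_left k s)]
    exact Option.isSome_iff_exists.2 ⟨_, hs⟩
  · rintro ⟨w, k, hk, s, -, h⟩
    rw [length_seg] at hk
    obtain ⟨v, hv⟩ := Option.isSome_iff_exists.1 h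
    rw [take_seg O hk] at hv
    refine Part.dom_iff_mem.2
      ⟨v, c.mem_eval_of_mem_eval_subst (fun i v hv => ?_) (Code.evaln_sound hv)⟩
    rw [eval_lookup, Part.mem_coe] at hv
    exact (mem_seg_getElem?_iff.1 hv).2

theorem primrecPred_exists_lt {α : Type*} [Primcodable α] {f : α → ℕ} {P : α → ℕ → Prop}
    (hf : Primrec f) (hP : PrimrecRel P) : PrimrecPred fun a => ∃ x < f a, P a x :=
  (hP.swap.exists_mem_list.comp (Primrec.list_range.comp hf) Primrec.id).of_eq (by simp)

theorem primrecPred_forall_lt {α : Type*} [Primcodable α] {f : α → ℕ} {P : α → ℕ → Prop}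
    (hf : Primrec f) (hP : PrimrecRel P) : PrimrecPred fun a => ∀ x < f a, P a x :=
  (primrecPred_exists_lt hf hP.not).not.of_eq (by simp)

theorem primrecPred_haltsWithin {α : Type*} [Primcodable α] {c : α → CodeO} {m : α → ℕ}
    {L : α → List ℕ} (hc : Primrec c) (hm : Primrec m) (hL : Primrec L) :
    PrimrecPred fun a => HaltsWithin (c a) (m a) (L a) := by
  have len : Primrec fun a => (L a).length + 1 := Primrec.succ.comp (Primrec.list_length.comp hL)
  have h : PrimrecPred fun a => ∃ k < (L a).length + 1, ∃ s < (L a).length + 1,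
      (Code.evaln s ((c a).subst (lookup ((L a).take k))) (m a)).isSome = true := by
    refine primrecPred_exists_lt len (primrecPred_exists_lt (len.comp Primrec.fst) ?_)
    have ha : Primrec fun p : (α × ℕ) × ℕ => p.1.1 := Primrec.fst.comp Primrec.fst
    have hk : Primrec fun p : (α × ℕ) × ℕ => p.1.2 := Primrec.snd.comp Primrec.fst
    have hcode := CodeO.primrec₂_subst.comp
      (primrec_lookup.comp (Primrec.list_take.comp hk (hL.comp ha))) (hc.comp ha)
    exact Primrec.eq.comp (Primrec.option_isSome.comp (Code.primrec_evaln.comp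
      (.pair (.pair Primrec.snd hcode) (hm.comp ha)))) (Primrec.const true)
  exact h.of_eq fun a => by simp only [HaltsWithin, Nat.lt_succ_iff]

theorem CodeO.eval_comp (O : ℕ → ℕ) (a b : CodeO) (n : ℕ) :
    (CodeO.comp a b).eval O n = (b.eval O n).bind fun x => a.eval O x := rfl

theorem CodeO.eval_pair (O : ℕ → ℕ) (a b : CodeO) (n : ℕ) :
    (CodeO.pair a b).eval O n =
      (a.eval O n).bind fun x => (b.eval O n).map (Nat.pair x) := by
  simp [CodeO.eval, Seq.seq, Part.bind_map]

theorem CodeO.eval_left (O : ℕ → ℕ) (n : ℕ) : CodeO.left.eval O n = Part.some n.unpair.1 := rfl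

theorem CodeO.eval_right (O : ℕ → ℕ) (n : ℕ) : CodeO.right.eval O n = Part.some n.unpair.2 := rfl

theorem CodeO.eval_oracle (O : ℕ → ℕ) (n : ℕ) : CodeO.oracle.eval O n = Part.some (O n) := rfl

theorem CodeO.eval_prec_zero (O : ℕ → ℕ) (a b : CodeO) (m : ℕ) :
    (CodeO.prec a b).eval O (Nat.pair m 0) = a.eval O m := by
  simp [CodeO.eval]

theorem CodeO.eval_prec_succ (O : ℕ → ℕ) (a b : CodeO) (m n : ℕ) :
    (CodeO.prec a b).eval O (Nat.pair m (n + 1)) =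
      ((CodeO.prec a b).eval O (Nat.pair m n)).bind fun i =>
        b.eval O (Nat.pair m (Nat.pair n i)) := by
  simp [CodeO.eval]

theorem CodeO.exists_eval_eq_of_primrec {g : ℕ → ℕ} (hg : Primrec g) :
    ∃ c : CodeO, ∀ O n, c.eval O n = Part.some (g n) := by
  obtain ⟨c, hc⟩ := Code.exists_code.1 (Nat.Partrec.of_primrec (Primrec.nat_iff.1 hg))
  exact ⟨.ofCode c, fun O n => by rw [eval_ofCode, hc]; rfl⟩

theorem CodeO.exists_eval_eq_ite {γ : Type*} [Primcodable γ] {P : γ → Prop} (hP : PrimrecPred P) :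
    ∃ c : CodeO, ∀ O n,
      c.eval O n = Part.some (if ∃ x, Encodable.encode x = n ∧ P x then 0 else 1) := by
  have hF : Primrec fun x => if P x then 0 else 1 := .ite hP (.const 0) (.const 1)
  obtain ⟨c, hc⟩ := exists_eval_eq_of_primrec (Primrec.option_getD.comp
    (Primrec.option_map Primrec.decode₂ (hF.comp Primrec.snd).to₂) (Primrec.const 1))
  refine ⟨c, fun O n => ?_⟩
  rw [hc]
  by_cases hn : ∃ x : γ, Encodable.encode x = n
  · obtain ⟨x, rfl⟩ := hn
    simp
  · have hdec : Encodable.decode₂ γ n = none :=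
      Option.eq_none_iff_forall_not_mem.2 fun x hx => hn ⟨x, Encodable.mem_decode₂.1 hx⟩
    have hne : ¬∃ x, Encodable.encode x = n ∧ P x := fun ⟨x, hx, _⟩ => hn ⟨x, hx⟩
    simp [hdec, hne]

theorem CodeO.exists_eval_eq_seg : ∃ c : CodeO, ∀ O a w,
    c.eval O (Nat.pair a w) = Part.some (Encodable.encode (seg O w)) := by
  have snoc : Primrec fun n : ℕ => Encodable.encode
      (((Encodable.decode n.unpair.1 : Option (List ℕ)).getD []) ++ [n.unpair.2]) :=
    Primrec.encode.comp <| Primrec.list_concat.comp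
      (Primrec.option_getD.comp (Primrec.decode.comp (Primrec.fst.comp Primrec.unpair)) (.const []))
      (Primrec.snd.comp Primrec.unpair)
  obtain ⟨s, hs⟩ := exists_eval_eq_of_primrec snoc
  refine ⟨.prec .zero (.comp s (.pair (.comp .right .right)
    (.comp .oracle (.comp .left .right)))), fun O a w => ?_⟩
  induction w with
  | zero => exact eval_prec_zero O _ _ a
  | succ w ih =>
    simp only [eval_prec_succ, ih, Part.bind_some, eval_comp, eval_pair, eval_left, eval_right,
      eval_oracle, Nat.unpair_pair, Part.map_some, hs, Encodable.encodek, Option.getD_some,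
      seg_succ]

/-- A code of the constant function with the given value. -/
def CodeO.const : ℕ → CodeO
  | 0 => .zero
  | n + 1 => .comp .succ (const n)

theorem CodeO.eval_const (O : ℕ → ℕ) (k n : ℕ) : (CodeO.const k).eval O n = Part.some k := by
  induction k with
  | zero => rfl
  | succ k ih => simp only [const, eval_comp, ih, Part.bind_some]; rfl

theorem CodeO.primrec₂_pair : Primrec₂ CodeO.pair := by
  have hpair : Primrec₂ fun a b : CodeO => Nat.pair (Encodable.encode a) (Encodable.encode b) :=
    Primrec₂.natPair.comp (Primrec.encode.comp .fst) (Primrec.encode.comp .snd)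
  have hcode : Primrec fun m : ℕ => 2 * (2 * m) + 5 :=
    Primrec.nat_add.comp (Primrec.nat_mul.comp (.const 2) (Primrec.nat_mul.comp (.const 2) .id))
      (.const 5)
  exact Primrec.encode_iff.1 (hcode.comp₂ hpair)

theorem CodeO.primrec₂_comp : Primrec₂ CodeO.comp := by
  have hpair : Primrec₂ fun a b : CodeO => Nat.pair (Encodable.encode a) (Encodable.encode b) :=
    Primrec₂.natPair.comp (Primrec.encode.comp .fst) (Primrec.encode.comp .snd)
  have hcode : Primrec fun m : ℕ => 2 * (2 * m + 1) + 5 :=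
    Primrec.nat_add.comp (Primrec.nat_mul.comp (.const 2)
      (Primrec.succ.comp (Primrec.nat_mul.comp (.const 2) .id))) (.const 5)
  exact Primrec.encode_iff.1 (hcode.comp₂ hpair)

theorem CodeO.primrec_const : Primrec CodeO.const := by
  have step : Primrec₂ fun (_ : ℕ) c => CodeO.comp .succ c :=
    (CodeO.primrec₂_comp.comp (.const .succ) .snd).to₂
  have h := Primrec.nat_rec₁ CodeO.zero step
  refine h.of_eq fun n => ?_
  induction n with
  | zero => rfl
  | succ n ih => rw [const, ← ih]

theorem CodeO.dom_eval_rfind' {O : ℕ → ℕ} {c : CodeO} {f : ℕ → ℕ} {a : ℕ}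
    (hc : ∀ w, c.eval O (Nat.pair a w) = Part.some (f w)) :
    ((CodeO.rfind' c).eval O (Nat.pair a 0)).Dom ↔ ∃ w, f w = 0 := by
  simp only [Part.dom_iff_mem, CodeO.eval, mem_rfind'_iff, Nat.unpair_pair, Nat.add_zero, hc,
    Part.mem_some_iff]
  constructor
  · rintro ⟨_, w, ⟨h, -⟩, -⟩
    exact ⟨w, h.symm⟩
  · intro h
    exact ⟨_, Nat.find h, ⟨(Nat.find_spec h).symm, fun k hk => ⟨_, rfl, Nat.find_min h hk⟩⟩, rfl⟩

theorem CodeO.exists_primrec_dom_eq {α β : Type*} [Primcodable α] [Primcodable β]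
    {Q : α → β → List ℕ → Prop} (hQ : PrimrecPred fun p : α × β × List ℕ => Q p.1 p.2.1 p.2.2) :
    ∃ j : α → CodeO, Primrec j ∧ ∀ O a,
      {m | ((j a).eval O m).Dom} = Encodable.encode '' {b | ∃ w, Q a b (seg O w)} := by
  obtain ⟨s, hs⟩ := exists_eval_eq_seg
  obtain ⟨t, ht⟩ := exists_eval_eq_ite hQ
  let test : CodeO := .comp t (.pair (.comp .left .left) (.pair (.comp .right .left) s))
  have htest (O : ℕ → ℕ) (a : α) (m w : ℕ) :
      test.eval O (Nat.pair (Nat.pair (Encodable.encode a) m) w) =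
        Part.some (if ∃ b, Encodable.encode b = m ∧ Q a b (seg O w) then 0 else 1) := by
    simp only [test, eval_comp, eval_pair, eval_left, eval_right, Nat.unpair_pair, Part.bind_some,
      Part.map_some, hs, ht]
    simp [Nat.pair_eq_pair, and_assoc]
  refine ⟨fun a => .comp (.rfind' test)
    (.pair (.pair (.const (Encodable.encode a)) (.pair .left .right)) .zero), ?_, fun O a => ?_⟩
  · exact primrec₂_comp.comp (.const _) (primrec₂_pair.comp (primrec₂_pair.comp
      (primrec_const.comp Primrec.encode) (.const _)) (.const _))
  · ext m
    have hzero : CodeO.zero.eval O m = Part.some 0 := rfl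
    simp only [Set.mem_ofPred_eq, Set.mem_image, eval_comp, eval_pair, eval_const, eval_left,
      eval_right, hzero, Part.bind_some, Part.map_some, Nat.pair_unpair,
      dom_eval_rfind' (htest O a m)]
    simp only [ite_eq_left_iff, not_exists, not_and, one_ne_zero, imp_false, not_forall,
      Decidable.not_not]
    exact ⟨fun ⟨w, b, h, q⟩ => ⟨b, ⟨w, q⟩, h⟩, fun ⟨b, ⟨w, q⟩, h⟩ => ⟨w, b, h, q⟩⟩

/-- The approximation to the first `k` values of the jump of an oracle that is computed from the
initial segment `L` of that oracle. -/
noncomputable def jumpApprox (k : ℕ) (L : List ℕ) : List ℕ :=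
  (List.range k).map fun i => if HaltsWithin (Denumerable.ofNat CodeO i) i L then 1 else 0

theorem primrec₂_jumpApprox : Primrec₂ jumpApprox := by
  refine Primrec.list_map (Primrec.list_range.comp .fst) (Primrec.ite ?_ (.const 1) (.const 0))
  exact primrecPred_haltsWithin ((Primrec.ofNat CodeO).comp .snd) .snd (Primrec.snd.comp .fst)

theorem jump_eq_ite (O : ℕ → ℕ) (e : ℕ) :
    jump O e = if ((Denumerable.ofNat CodeO e).eval O e).Dom then 1 else 0 := by
  obtain ⟨c, rfl⟩ := CodeO.encode_surjective e
  rw [← CodeO.encode_eq, Denumerable.ofNat_encode]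
  simp only [jump, ← CodeO.encode_eq, Encodable.encode_inj, exists_eq_left]

theorem eventually_jumpApprox_eq (O : ℕ → ℕ) (k : ℕ) :
    ∀ᶠ w in atTop, jumpApprox k (seg O w) = seg (jump O) k := by
  have hlim (i : ℕ) : ∀ᶠ w in atTop,
      HaltsWithin (Denumerable.ofNat CodeO i) i (seg O w) ↔
        ((Denumerable.ofNat CodeO i).eval O i).Dom := by
    by_cases h : ((Denumerable.ofNat CodeO i).eval O i).Dom
    · obtain ⟨w, hw⟩ := (dom_iff_exists_haltsWithin O _ i).1 h
      filter_upwards [eventually_ge_atTop w] with w' hww'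
      exact iff_of_true (hw.mono (seg_prefix_seg O hww')) h
    · refine .of_forall fun w => iff_of_false (fun hw => h ?_) h
      exact (dom_iff_exists_haltsWithin O _ i).2 ⟨w, hw⟩
  filter_upwards [(Set.finite_lt_nat k).eventually_all.2 fun i _ => hlim i] with w hw
  refine List.map_congr_left fun i hi => ?_
  simp only [jump_eq_ite, hw i (List.mem_range.1 hi)]

theorem jumpApprox_prefix {k l : ℕ} (h : k ≤ l) (L : List ℕ) :
    jumpApprox k L <+: jumpApprox l L := by
  have hrange : List.range k <+: List.range l := by
    simpa [List.take_range, h] using List.take_prefix k (List.range l)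
  exact hrange.map _

theorem exists_primrec_dom_eval_jump_iff : ∃ j : CodeO → CodeO, Primrec j ∧ ∀ O c m,
    (c.eval (jump O) m).Dom ↔ ∃ k, ¬ ((j c).eval O (Nat.pair m k)).Dom := by
  let Q (c : CodeO) (b : ℕ × ℕ) (L : List ℕ) : Prop :=
    b.2 ≤ L.length ∧ ¬ HaltsWithin c b.1 (jumpApprox b.2 L)
  have hQ : PrimrecPred fun p : CodeO × (ℕ × ℕ) × List ℕ => Q p.1 p.2.1 p.2.2 := by
    have m : Primrec fun p : CodeO × (ℕ × ℕ) × List ℕ => p.2.1.1 :=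
      Primrec.fst.comp (Primrec.fst.comp .snd)
    have k : Primrec fun p : CodeO × (ℕ × ℕ) × List ℕ => p.2.1.2 :=
      Primrec.snd.comp (Primrec.fst.comp .snd)
    have L : Primrec fun p : CodeO × (ℕ × ℕ) × List ℕ => p.2.2 := Primrec.snd.comp .snd
    exact (Primrec.nat_le.comp k (Primrec.list_length.comp L)).and
      (primrecPred_haltsWithin .fst m (primrec₂_jumpApprox.comp k L)).not
  obtain ⟨j, hj, hdom⟩ := CodeO.exists_primrec_dom_eq hQ
  refine ⟨j, hj, fun O c m => ?_⟩
  have hcode (k : ℕ) : ((j c).eval O (Nat.pair m k)).Dom ↔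
      ∃ w, k ≤ w ∧ ¬ HaltsWithin c m (jumpApprox k (seg O w)) := by
    simpa [Q, Nat.pair_eq_pair] using Set.ext_iff.1 (hdom O c) (Nat.pair m k)
  simp only [hcode, not_exists, not_and, not_not]
  rw [dom_iff_exists_haltsWithin]
  constructor
  · rintro ⟨k, hk⟩
    obtain ⟨w, hw⟩ := eventually_atTop.1 (eventually_jumpApprox_eq O k)
    refine ⟨max k w, fun l hl => ?_⟩
    rw [← hw l (le_of_max_le_right hl)] at hk
    exact hk.mono (jumpApprox_prefix (le_max_left k w) _)
  · rintro ⟨k, hk⟩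
    obtain ⟨w, hw, hkw⟩ := ((eventually_jumpApprox_eq O k).and (eventually_ge_atTop k)).exists
    exact ⟨k, hw ▸ hk w hkw⟩

theorem exists_primrec_sigmaNumIdx_eq (n : ℕ) : ∃ h : CodeO → CodeO, Primrec h ∧
    ∀ c, SigmaNumIdx n (h c) = {m | (c.eval (iterJump n) m).Dom} := by
  induction n with
  | zero => exact ⟨id, Primrec.id, fun c => rfl⟩
  | succ n ih =>
    obtain ⟨h, hh, hS⟩ := ih
    obtain ⟨j, hj, hJ⟩ := exists_primrec_dom_eval_jump_iff
    refine ⟨fun c => h (j c), hh.comp hj, fun c => Set.ext fun m => ?_⟩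
    simp only [SigmaNumIdx, hS]
    exact (hJ (iterJump n) c m).symm

theorem exists_primrec_sigmaNumIdx_eq_image (n : ℕ) {α β : Type*} [Primcodable α] [Primcodable β]
    {Q : α → β → List ℕ → Prop} (hQ : PrimrecPred fun p : α × β × List ℕ => Q p.1 p.2.1 p.2.2) :
    ∃ g : α → CodeO, Primrec g ∧ ∀ a,
      SigmaNumIdx n (g a) = Encodable.encode '' {b | ∃ w, Q a b (seg (iterJump n) w)} := by
  obtain ⟨h, hh, hS⟩ := exists_primrec_sigmaNumIdx_eq n
  obtain ⟨j, hj, hJ⟩ := CodeO.exists_primrec_dom_eq hQ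
  exact ⟨fun a => h (j a), hh.comp hj, fun a => (hS _).trans (hJ _ a)⟩

theorem exists_computable_encode {g : CodeO → CodeO} (hg : Primrec g) :
    ∃ f : ℕ → ℕ, Computable f ∧ ∀ c : CodeO, f c.encode = (g c).encode := by
  refine ⟨fun n => Encodable.encode (g (Denumerable.ofNat CodeO n)),
    (Primrec.encode.comp (hg.comp (Primrec.ofNat CodeO))).to_comp, fun c => ?_⟩
  simp only [← CodeO.encode_eq, Denumerable.ofNat_encode]

theorem encode_mem_strCodes_iff {T : Set (List Bool)} {σ : List Bool} :
    Encodable.encode σ ∈ strCodes T ↔ σ ∈ T := by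
  simp [strCodes]

end OracleCodes

section DyadicMeasure

theorem length_initSeg (X : Cantor) (n : ℕ) : (initSeg X n).length = n := length_seg X n

theorem take_initSeg (X : Cantor) {k n : ℕ} (h : k ≤ n) : (initSeg X n).take k = initSeg X k :=
  take_seg X h

theorem eq_initSeg_of_prefix {X : Cantor} {n : ℕ} {ρ : List Bool} (h : ρ <+: initSeg X n) :
    ρ = initSeg X ρ.length := by
  rw [← take_initSeg X (length_initSeg X n ▸ h.length_le)]
  exact List.prefix_iff_eq_take.1 h

/-- The natural number with binary expansion `σ`, most significant bit first. -/
def binaryValue (σ : List Bool) : ℕ := σ.foldl (fun a b => 2 * a + b.toNat) 0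

theorem binaryValue_concat (σ : List Bool) (b : Bool) :
    binaryValue (σ ++ [b]) = 2 * binaryValue σ + b.toNat := by
  simp [binaryValue]

/-- The right end point of the dyadic interval of reals whose binary expansion begins with `σ`. -/
noncomputable def rightEnd (σ : List Bool) : ℝ := (binaryValue σ + 1) / 2 ^ σ.length

theorem rightEnd_pos (σ : List Bool) : 0 < rightEnd σ := by
  unfold rightEnd
  positivity

theorem rightEnd_concat_le (σ : List Bool) (b : Bool) : rightEnd (σ ++ [b]) ≤ rightEnd σ := by
  have hb : (b.toNat : ℝ) ≤ 1 := mod_cast b.toNat_le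
  rw [rightEnd, rightEnd, div_le_div_iff₀ (by positivity) (by positivity), binaryValue_concat,
    List.length_append, List.length_singleton, pow_succ]
  push_cast
  nlinarith [pow_pos (zero_lt_two' ℝ) σ.length]

theorem rightEnd_antitone {σ τ : List Bool} (h : σ <+: τ) : rightEnd τ ≤ rightEnd σ := by
  obtain ⟨ρ, rfl⟩ := h
  induction ρ using List.reverseRecOn with
  | nil => simp
  | append_singleton ρ b ih =>
    rw [← List.append_assoc]
    exact (rightEnd_concat_le _ b).trans ih

theorem binaryValue_initSeg_digits {x : ℝ} (h0 : 0 ≤ x) (h1 : x < 1) (n : ℕ) :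
    (binaryValue (initSeg (digits x) n) : ℤ) = ⌊x * 2 ^ n⌋ := by
  induction n with
  | zero =>
    have hfloor : ⌊x⌋ = 0 := Int.floor_eq_zero_iff.2 ⟨h0, h1⟩
    simp [initSeg, binaryValue, hfloor]
  | succ n ih =>
    have hfloor : ⌊x * 2 ^ n⌋ = ⌊x * 2 ^ (n + 1)⌋ / 2 := by
      have h := Int.floor_div_natCast (x * 2 ^ (n + 1)) 2
      rwa [pow_succ, ← mul_assoc, Nat.cast_ofNat, mul_div_cancel_right₀ _ two_ne_zero, mul_assoc,
        ← pow_succ] at h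
    have hdigit : ((digits x n).toNat : ℤ) = ⌊x * 2 ^ (n + 1)⌋ % 2 := by
      rcases Int.emod_two_eq_zero_or_one ⌊x * 2 ^ (n + 1)⌋ with h | h <;> simp [digits, h]
    have hsucc : initSeg (digits x) (n + 1) = initSeg (digits x) n ++ [digits x n] :=
      seg_succ (digits x) n
    rw [hsucc, binaryValue_concat]
    push_cast
    rw [ih, hfloor, hdigit]
    exact Int.mul_ediv_add_emod _ 2

theorem lt_rightEnd_initSeg_digits {x : ℝ} (h0 : 0 ≤ x) (h1 : x < 1) (n : ℕ) :
    x < rightEnd (initSeg (digits x) n) := by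
  have h := Int.lt_floor_add_one (x * 2 ^ n)
  rw [← binaryValue_initSeg_digits h0 h1 n] at h
  rw [rightEnd, length_initSeg, lt_div_iff₀ (by positivity)]
  exact_mod_cast h

theorem rightEnd_initSeg_digits_le {x : ℝ} (h0 : 0 ≤ x) (h1 : x < 1) (n : ℕ) :
    rightEnd (initSeg (digits x) n) ≤ x + (1 / 2) ^ n := by
  have h := Int.floor_le (x * 2 ^ n)
  rw [← binaryValue_initSeg_digits h0 h1 n, Int.cast_natCast] at h
  rw [rightEnd, length_initSeg, div_le_iff₀ (by positivity), add_mul, ← mul_pow]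
  simpa using h

theorem exists_rightEnd_initSeg_digits_lt {x α : ℝ} (h0 : 0 ≤ x) (h1 : x < 1) (h : x < α) :
    ∃ n, rightEnd (initSeg (digits x) n) < α := by
  obtain ⟨n, hn⟩ := exists_pow_lt_of_lt_one (sub_pos.2 h) one_half_lt_one
  exact ⟨n, by linarith [rightEnd_initSeg_digits_le h0 h1 n]⟩

theorem measurable_digits : Measurable digits := by
  refine measurable_pi_iff.2 fun n => ?_
  have h : Measurable fun x : ℝ => ⌊x * 2 ^ (n + 1)⌋ :=
    Int.measurable_floor.comp (measurable_id.mul_const _)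
  exact (measurable_of_countable fun z : ℤ => decide (z % 2 = 1)).comp h

theorem measurableSet_initSeg_preimage (n : ℕ) (S : Set (List Bool)) :
    MeasurableSet ((fun X => initSeg X n) ⁻¹' S) := by
  have h (X : Cantor) : initSeg X n = List.ofFn fun i : Fin n => X i := by
    rw [initSeg, List.ofFn_eq_map, ← List.map_coe_finRange_eq_range, List.map_map]
    rfl
  have hrestrict : Measurable fun (X : Cantor) (i : Fin n) => X i :=
    measurable_pi_iff.2 fun i => measurable_pi_apply _
  simp only [h]
  exact hrestrict (List.ofFn ⁻¹' S).to_countable.measurableSet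

theorem measurableSet_cyl (S : Set (List Bool)) : MeasurableSet (cyl S) := by
  have h : cyl S = ⋃ n, (fun X => initSeg X n) ⁻¹' S := by ext X; simp [cyl]
  rw [h]
  exact .iUnion fun n => measurableSet_initSeg_preimage n S

theorem muR_cyl_eq_of_rightEnd {S : Set (List Bool)} {α : ℝ} (h0 : 0 ≤ α) (h1 : α ≤ 1)
    (hlt : {σ | rightEnd σ < α} ⊆ S) (hle : S ⊆ {σ | rightEnd σ ≤ α}) : muR (cyl S) = α := by
  have h : digits ⁻¹' cyl S ∩ Set.Ico 0 1 = Set.Ico 0 α := by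
    ext x
    constructor
    · rintro ⟨⟨n, hn⟩, hx0, hx1⟩
      exact ⟨hx0, (lt_rightEnd_initSeg_digits hx0 hx1 n).trans_le (hle hn)⟩
    · rintro ⟨hx0, hxα⟩
      have hx1 : x < 1 := hxα.trans_le h1
      obtain ⟨n, hn⟩ := exists_rightEnd_initSeg_digits_lt hx0 hx1 hxα
      exact ⟨⟨n, hlt hn⟩, hx0, hx1⟩
  rw [muR, mu, Measure.map_apply measurable_digits (measurableSet_cyl S),
    Measure.restrict_apply (measurable_digits (measurableSet_cyl S)), h, Real.volume_Ico, sub_zero,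
    ENNReal.toReal_ofReal h0]

end DyadicMeasure

section RationalComparison

/-- The relation `rightEnd σ ≤ q` for a rational `q` with code `m`. Such a code is the pair of the
codes of numerator and denominator; as `rightEnd σ` is positive, a negative numerator may be
replaced by `0`. -/
def RightEndLe (σ : List Bool) (m : ℕ) : Prop :=
  (binaryValue σ + 1) * m.unpair.2 ≤ (Denumerable.ofNat ℤ m.unpair.1).toNat * 2 ^ σ.length

theorem rightEndLe_iff (σ : List Bool) (m : ℕ) :
    RightEndLe σ m ↔ rightEnd σ * m.unpair.2 ≤ (Denumerable.ofNat ℤ m.unpair.1).toNat := by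
  rw [rightEnd, div_mul_eq_mul_div, div_le_iff₀ (by positivity), RightEndLe]
  exact_mod_cast Iff.rfl

theorem RightEndLe.of_prefix {σ τ : List Bool} {m : ℕ} (h : RightEndLe σ m) (hpre : σ <+: τ) :
    RightEndLe τ m := by
  rw [rightEndLe_iff] at h ⊢
  exact (mul_le_mul_of_nonneg_right (rightEnd_antitone hpre) (Nat.cast_nonneg _)).trans h

theorem rightEndLe_encode_iff (σ : List Bool) (q : ℚ) :
    RightEndLe σ (Encodable.encode q) ↔ rightEnd σ ≤ q := by
  have hcode : Encodable.encode q = Nat.pair (Encodable.encode q.num) q.den := rfl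
  have hden : (0 : ℝ) < q.den := mod_cast q.den_pos
  have hpos : 0 < rightEnd σ * q.den := mul_pos (rightEnd_pos σ) hden
  have htoNat : (q.num.toNat : ℝ) = max (q.num : ℝ) 0 := mod_cast Int.ofNat_toNat q.num
  rw [rightEndLe_iff, hcode, Nat.unpair_pair, Denumerable.ofNat_encode, htoNat, le_max_iff,
    or_iff_left hpos.not_ge, Rat.cast_def, le_div_iff₀ hden]

theorem primrec_binaryValue : Primrec binaryValue :=
  Primrec.list_foldl .id (.const 0) (Primrec.nat_add.comp
    (Primrec.nat_mul.comp (.const 2) (Primrec.fst.comp .snd))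
    ((Primrec.dom_finite Bool.toNat).comp (Primrec.snd.comp .snd))).to₂

theorem primrec_toNat_ofNat : Primrec fun n : ℕ => (Denumerable.ofNat ℤ n).toNat := by
  have heven : PrimrecPred fun n : ℕ => n % 2 = 0 :=
    Primrec.eq.comp (Primrec.nat_mod.comp .id (.const 2)) (.const 0)
  refine (Primrec.ite heven (Primrec.nat_div.comp .id (.const 2)) (.const 0)).of_eq fun n => ?_
  obtain ⟨z, rfl⟩ : ∃ z : ℤ, n = Encodable.encode z := ⟨_, (Denumerable.encode_ofNat n).symm⟩
  rw [Denumerable.ofNat_encode]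
  rcases z with a | a
  · have hcode : Encodable.encode (Int.ofNat a) = 2 * a := rfl
    rw [hcode, if_pos (by omega)]
    simp
  · have hcode : Encodable.encode (Int.negSucc a) = 2 * a + 1 := rfl
    rw [hcode, if_neg (by omega), Int.toNat_negSucc]

theorem primrec_two_pow : Primrec fun n : ℕ => 2 ^ n :=
  (Primrec₂.unpaired'.1 Nat.Primrec.pow).comp (.const 2) .id

theorem primrecRel_rightEndLe : PrimrecRel RightEndLe :=
  Primrec.nat_le.comp
    (Primrec.nat_mul.comp (Primrec.succ.comp (primrec_binaryValue.comp .fst))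
      (Primrec.snd.comp (Primrec.unpair.comp .snd)))
    (Primrec.nat_mul.comp (primrec_toNat_ofNat.comp (Primrec.fst.comp (Primrec.unpair.comp .snd)))
      (primrec_two_pow.comp (Primrec.list_length.comp .fst)))

end RationalComparison

section PrefixFreeGenerators

/-- The elements of a set of strings none of whose proper prefixes is in the set. -/
def minimalStrings (P : Set (List Bool)) : Set (List Bool) :=
  {σ | σ ∈ P ∧ ∀ i < σ.length, σ.take i ∉ P}

theorem isPrefixFree_minimalStrings (P : Set (List Bool)) : IsPrefixFree (minimalStrings P) := by
  rintro σ ⟨hσ, -⟩ τ ⟨-, hτ⟩ h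
  refine h.eq_of_length_le (not_lt.1 fun hlt => hτ σ.length hlt ?_)
  rwa [← List.prefix_iff_eq_take.1 h]

theorem cyl_minimalStrings (P : Set (List Bool)) : cyl (minimalStrings P) = cyl P := by
  refine Set.Subset.antisymm (fun X ⟨n, hn⟩ => ⟨n, hn.1⟩) fun X hX => ?_
  refine ⟨Nat.find hX, Nat.find_spec hX, fun i hi => ?_⟩
  rw [length_initSeg] at hi
  rw [take_initSeg X hi.le]
  exact Nat.find_min hX hi

variable {U : ℕ → Set (List Bool)}

theorem cyl_diagonal_eq_cyl_iUnion (hU : Monotone U) (hup : ∀ s, UpClosed (U s)) :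
    cyl {σ | σ ∈ U σ.length} = cyl (⋃ s, U s) := by
  refine Set.Subset.antisymm (fun X ⟨n, hn⟩ => ⟨n, Set.mem_iUnion.2 ⟨_, hn⟩⟩) ?_
  rintro X ⟨n, hn⟩
  obtain ⟨s, hs⟩ := Set.mem_iUnion.1 hn
  refine ⟨max n s, ?_⟩
  rw [Set.mem_ofPred_eq, length_initSeg]
  exact hU (le_max_right n s) (hup s _ hs _ (seg_prefix_seg X (le_max_left n s)))

/-- `t` is at least the length of `ρ`, and every proper prefix of `ρ` has been enumerated by stage
`t` of the enumeration `U`. -/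
def SettledBy (U : ℕ → Set (List Bool)) (ρ : List Bool) (t : ℕ) : Prop :=
  ρ.length ≤ t ∧ ∀ i < ρ.length, ρ.take i ∈ U t

/-- The strings `ρ` that are minimal among those never enumerated by `U`, each replaced by its
extensions of length the least stage by which all proper prefixes of `ρ` are enumerated. The length
of a string thus bounds the stages to be searched, and `ρ ∉ ⋃ s, U s` is the only undecidable
condition. -/
def settledExtensions (U : ℕ → Set (List Bool)) : Set (List Bool) :=
  {σ | ∃ ρ, ρ <+: σ ∧ ρ ∉ ⋃ s, U s ∧ IsLeast {t | SettledBy U ρ t} σ.length}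

theorem SettledBy.eq_of_prefix {ρ τ : List Bool} {t : ℕ} (h : SettledBy U τ t)
    (hρ : ρ ∉ ⋃ s, U s) (hpre : ρ <+: τ) : ρ = τ := by
  refine hpre.eq_of_length_le (not_lt.1 fun hlt => hρ (Set.mem_iUnion.2 ⟨t, ?_⟩))
  rw [List.prefix_iff_eq_take.1 hpre]
  exact h.2 ρ.length hlt

theorem isPrefixFree_settledExtensions : IsPrefixFree (settledExtensions U) := by
  rintro σ ⟨ρ, hρσ, hρ, hleast⟩ σ' ⟨ρ', hρ'σ', hρ', hleast'⟩ h
  have heq : ρ = ρ' := by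
    rcases List.prefix_or_prefix_of_prefix (hρσ.trans h) hρ'σ' with hpre | hpre
    · exact hleast'.1.eq_of_prefix hρ hpre
    · exact (hleast.1.eq_of_prefix hρ' hpre).symm
  subst heq
  exact h.eq_of_length (hleast.unique hleast')

theorem cyl_settledExtensions (hU : Monotone U) :
    cyl (settledExtensions U) = cyl (⋃ s, U s)ᶜ := by
  refine Set.Subset.antisymm ?_ fun X hX => ?_
  · rintro X ⟨n, ρ, hρn, hρ, -⟩
    exact ⟨ρ.length, eq_initSeg_of_prefix hρn ▸ hρ⟩
  · let n := Nat.find hX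
    have hsettled : ∃ t, SettledBy U (initSeg X n) t := by
      have hprefix (i : ℕ) (hi : i < n) : ∀ᶠ t in atTop, initSeg X i ∈ U t := by
        obtain ⟨s, hs⟩ := Set.mem_iUnion.1 (not_not.1 (Nat.find_min hX hi))
        exact eventually_atTop.2 ⟨s, fun t ht => hU ht hs⟩
      obtain ⟨t, hnt, ht⟩ := ((eventually_ge_atTop n).and
        ((Set.finite_lt_nat n).eventually_all.2 hprefix)).exists
      refine ⟨t, by rwa [length_initSeg], fun i hi => ?_⟩
      rw [length_initSeg] at hi
      exact take_initSeg X hi.le ▸ ht i hi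
    refine ⟨Nat.find hsettled, initSeg X n, seg_prefix_seg X ?_, Nat.find_spec hX, ?_⟩
    · exact (length_initSeg X n).ge.trans (Nat.find_spec hsettled).1
    · rw [length_initSeg]
      exact ⟨Nat.find_spec hsettled, fun t ht => Nat.find_min' hsettled ht⟩

end PrefixFreeGenerators

section IndexedGenerators

/-- The string `σ` stands in the relation `R` to some number on which the code `c`, given the
initial segment `L` of its oracle, halts; the length of `L` bounds both the search and the
computations. -/
def Hits (R : List Bool → ℕ → Prop) (c : CodeO) (σ : List Bool) (L : List ℕ) : Prop :=
  ∃ m < L.length, HaltsWithin c m L ∧ R σ m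

/-- The `s`-th stage of the enumeration, by the code `c` with oracle `O`, of the strings standing in
the relation `R` to some number in the domain of `c`. -/
def stage (R : List Bool → ℕ → Prop) (O : ℕ → ℕ) (c : CodeO) (s : ℕ) : Set (List Bool) :=
  {σ | Hits R c σ (seg O s)}

theorem mem_stage_iff {R : List Bool → ℕ → Prop} {O : ℕ → ℕ} {c : CodeO} {σ : List Bool} {s : ℕ} :
    σ ∈ stage R O c s ↔ Hits R c σ (seg O s) := Iff.rfl

theorem monotone_stage (R : List Bool → ℕ → Prop) (O : ℕ → ℕ) (c : CodeO) :
    Monotone (stage R O c) :=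
  fun _ _ hst _ ⟨m, hm, hc, hR⟩ => ⟨m, hm.trans_le (seg_prefix_seg O hst).length_le,
    hc.mono (seg_prefix_seg O hst), hR⟩

theorem mem_iUnion_stage_iff {R : List Bool → ℕ → Prop} {O : ℕ → ℕ} {c : CodeO} {σ : List Bool} :
    σ ∈ ⋃ s, stage R O c s ↔ ∃ m, (c.eval O m).Dom ∧ R σ m := by
  simp only [Set.mem_iUnion, mem_stage_iff, Hits, length_seg, dom_iff_exists_haltsWithin]
  constructor
  · rintro ⟨s, m, -, hc, hR⟩
    exact ⟨m, ⟨s, hc⟩, hR⟩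
  · rintro ⟨m, ⟨s, hc⟩, hR⟩
    exact ⟨max (m + 1) s, m, by omega, hc.mono (seg_prefix_seg O (le_max_right _ s)), hR⟩

variable {R : List Bool → ℕ → Prop}

theorem primrecPred_hits (hR : PrimrecRel R) {α : Type*} [Primcodable α] {c : α → CodeO}
    {σ : α → List Bool} {L : α → List ℕ} (hc : Primrec c) (hσ : Primrec σ) (hL : Primrec L) :
    PrimrecPred fun a => Hits R (c a) (σ a) (L a) :=
  primrecPred_exists_lt (Primrec.list_length.comp hL)
    ((primrecPred_haltsWithin (hc.comp .fst) .snd (hL.comp .fst)).and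
      (hR.comp (hσ.comp .fst) .snd))

theorem exists_primrec_sigmaNumIdx_eq_minimalStrings (n : ℕ) (hR : PrimrecRel R) :
    ∃ g : CodeO → CodeO, Primrec g ∧ ∀ c, SigmaNumIdx n (g c) =
      strCodes (minimalStrings {σ | σ ∈ stage R (iterJump n) c σ.length}) := by
  let Q (c : CodeO) (σ : List Bool) (L : List ℕ) : Prop :=
    L.length = σ.length ∧ Hits R c σ L ∧ ∀ i < σ.length, ¬ Hits R c (σ.take i) (L.take i)
  have hQ : PrimrecPred fun p : CodeO × List Bool × List ℕ => Q p.1 p.2.1 p.2.2 := by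
    have σ : Primrec fun p : CodeO × List Bool × List ℕ => p.2.1 := Primrec.fst.comp .snd
    have L : Primrec fun p : CodeO × List Bool × List ℕ => p.2.2 := Primrec.snd.comp .snd
    refine (Primrec.eq.comp (Primrec.list_length.comp L) (Primrec.list_length.comp σ)).and
      ((primrecPred_hits hR .fst σ L).and
        (primrecPred_forall_lt (Primrec.list_length.comp σ) (PrimrecPred.not ?_)))
    exact primrecPred_hits hR (Primrec.fst.comp .fst) (Primrec.list_take.comp .snd (σ.comp .fst))
      (Primrec.list_take.comp .snd (L.comp .fst))
  obtain ⟨g, hg, hS⟩ := exists_primrec_sigmaNumIdx_eq_image n hQ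
  refine ⟨g, hg, fun c => (hS c).trans (congrArg strCodes (Set.ext fun σ => ?_))⟩
  have hw : (∃ w, Q c σ (seg (iterJump n) w)) ↔ σ ∈ stage R (iterJump n) c σ.length ∧
      ∀ i < σ.length, ¬ Hits R c (σ.take i) ((seg (iterJump n) σ.length).take i) := by
    simp only [Q, length_seg, exists_eq_left, mem_stage_iff]
  refine hw.trans (and_congr_right fun _ => forall₂_congr fun i hi => ?_)
  rw [take_seg _ hi.le, Set.mem_ofPred_eq, mem_stage_iff, List.length_take_of_le hi.le]

theorem notMem_settledExtensions_iff {U : ℕ → Set (List Bool)} (hU : Monotone U) {σ : List Bool} :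
    σ ∉ settledExtensions U ↔ ∃ w, σ.length ≤ w ∧ ∀ k < σ.length + 1,
      IsLeast {t | SettledBy U (σ.take k) t} σ.length → σ.take k ∈ U w := by
  constructor
  · intro hσ
    have hk (k : ℕ) (hleast : IsLeast {t | SettledBy U (σ.take k) t} σ.length) :
        ∀ᶠ w in atTop, σ.take k ∈ U w := by
      by_contra hnot
      refine hσ ⟨σ.take k, List.take_prefix k σ, fun hmem => hnot ?_, hleast⟩
      obtain ⟨s, hs⟩ := Set.mem_iUnion.1 hmem
      exact eventually_atTop.2 ⟨s, fun t ht => hU ht hs⟩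
    exact ((eventually_ge_atTop _).and ((Set.finite_lt_nat _).eventually_all.2 fun k _ =>
      Filter.eventually_imp_distrib_left.2 (hk k))).exists
  · rintro ⟨w, -, hw⟩ ⟨ρ, hpre, hρ, hleast⟩
    rw [List.prefix_iff_eq_take.1 hpre] at hρ hleast
    exact hρ (Set.mem_iUnion.2 ⟨w, hw _ (Nat.lt_succ_of_le hpre.length_le) hleast⟩)

/-- The relation `SettledBy` for the stages of the enumeration with code `c`, read off from a
sufficiently long initial segment `L` of the oracle. -/
def HitsSettledBy (R : List Bool → ℕ → Prop) (c : CodeO) (ρ : List Bool) (L : List ℕ) (t : ℕ) :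
    Prop :=
  ρ.length ≤ t ∧ ∀ i < ρ.length, Hits R c (ρ.take i) (L.take t)

theorem hitsSettledBy_seg_iff {O : ℕ → ℕ} {c : CodeO} {ρ : List Bool} {t w : ℕ} (h : t ≤ w) :
    HitsSettledBy R c ρ (seg O w) t ↔ SettledBy (stage R O c) ρ t := by
  simp only [HitsSettledBy, SettledBy, take_seg O h, mem_stage_iff]

theorem primrecPred_hitsSettledBy (hR : PrimrecRel R) {α : Type*} [Primcodable α] {c : α → CodeO}
    {ρ : α → List Bool} {L : α → List ℕ} {t : α → ℕ} (hc : Primrec c) (hρ : Primrec ρ)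
    (hL : Primrec L) (ht : Primrec t) :
    PrimrecPred fun a => HitsSettledBy R (c a) (ρ a) (L a) (t a) :=
  (Primrec.nat_le.comp (Primrec.list_length.comp hρ) ht).and
    (primrecPred_forall_lt (Primrec.list_length.comp hρ) (primrecPred_hits hR (hc.comp .fst)
      (Primrec.list_take.comp .snd (hρ.comp .fst))
      (Primrec.list_take.comp (ht.comp .fst) (hL.comp .fst))))

/-- The relation that `t` is the least stage with `HitsSettledBy R c ρ L t`. -/
def HitsFirstSettledBy (R : List Bool → ℕ → Prop) (c : CodeO) (ρ : List Bool) (L : List ℕ) (t : ℕ) :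
    Prop :=
  HitsSettledBy R c ρ L t ∧ ∀ s < t, ¬ HitsSettledBy R c ρ L s

theorem hitsFirstSettledBy_seg_iff {O : ℕ → ℕ} {c : CodeO} {ρ : List Bool} {t w : ℕ} (h : t ≤ w) :
    HitsFirstSettledBy R c ρ (seg O w) t ↔ IsLeast {s | SettledBy (stage R O c) ρ s} t := by
  rw [HitsFirstSettledBy, hitsSettledBy_seg_iff h]
  refine and_congr_right fun _ => ⟨fun hnot s hset => ?_, fun hlb s hs hset => ?_⟩
  · exact not_lt.1 fun hs => hnot s hs ((hitsSettledBy_seg_iff (hs.le.trans h)).2 hset)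
  · exact hs.not_ge (hlb ((hitsSettledBy_seg_iff (hs.le.trans h)).1 hset))

theorem primrecPred_hitsFirstSettledBy (hR : PrimrecRel R) {α : Type*} [Primcodable α]
    {c : α → CodeO} {ρ : α → List Bool} {L : α → List ℕ} {t : α → ℕ} (hc : Primrec c)
    (hρ : Primrec ρ) (hL : Primrec L) (ht : Primrec t) :
    PrimrecPred fun a => HitsFirstSettledBy R (c a) (ρ a) (L a) (t a) := by
  have hbefore : PrimrecRel fun a s => ¬ HitsSettledBy R (c a) (ρ a) (L a) s :=
    (primrecPred_hitsSettledBy hR (hc.comp .fst) (hρ.comp .fst) (hL.comp .fst) .snd).not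
  exact (primrecPred_hitsSettledBy hR hc hρ hL ht).and (primrecPred_forall_lt ht hbefore)

theorem exists_primrec_sigmaNumIdx_eq_compl_settledExtensions (n : ℕ) (hR : PrimrecRel R) :
    ∃ g : CodeO → CodeO, Primrec g ∧ ∀ c, SigmaNumIdx n (g c) =
      strCodes (settledExtensions (stage R (iterJump n) c))ᶜ := by
  let Q (c : CodeO) (σ : List Bool) (L : List ℕ) : Prop := σ.length ≤ L.length ∧
    ∀ k < σ.length + 1, HitsFirstSettledBy R c (σ.take k) L σ.length → Hits R c (σ.take k) L
  have hQ : PrimrecPred fun p : CodeO × List Bool × List ℕ => Q p.1 p.2.1 p.2.2 := by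
    have σ : Primrec fun p : CodeO × List Bool × List ℕ => p.2.1 := Primrec.fst.comp .snd
    have L : Primrec fun p : CodeO × List Bool × List ℕ => p.2.2 := Primrec.snd.comp .snd
    have len := Primrec.list_length.comp σ
    have ρ : Primrec fun q : (CodeO × List Bool × List ℕ) × ℕ => q.1.2.1.take q.2 :=
      Primrec.list_take.comp .snd (σ.comp .fst)
    have c : Primrec fun q : (CodeO × List Bool × List ℕ) × ℕ => q.1.1 := Primrec.fst.comp .fst
    have himp := ((primrecPred_hitsFirstSettledBy hR c ρ (L.comp .fst) (len.comp .fst)).not.or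
      (primrecPred_hits hR c ρ (L.comp .fst))).of_eq fun _ => imp_iff_not_or.symm
    exact (Primrec.nat_le.comp len (Primrec.list_length.comp L)).and
      (primrecPred_forall_lt (Primrec.succ.comp len) himp)
  obtain ⟨g, hg, hS⟩ := exists_primrec_sigmaNumIdx_eq_image n hQ
  refine ⟨g, hg, fun c => (hS c).trans (congrArg strCodes (Set.ext fun σ => ?_))⟩
  rw [Set.mem_compl_iff, notMem_settledExtensions_iff (monotone_stage R _ c)]
  refine exists_congr fun w => ?_
  simp only [Q, length_seg]
  refine and_congr_right fun hw => forall₂_congr fun k _ => ?_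
  rw [hitsFirstSettledBy_seg_iff hw, mem_stage_iff]

end IndexedGenerators

section DedekindCuts

variable {O : ℕ → ℕ} {c : CodeO} {α : ℝ}

theorem iUnion_stage_rightEndLe
    (hc : {m | (c.eval O m).Dom} = {m | ∃ q : ℚ, Encodable.encode q = m ∧ (q : ℝ) < α}) :
    ⋃ s, stage RightEndLe O c s = {σ | rightEnd σ < α} := by
  ext σ
  have hdom (m : ℕ) : (c.eval O m).Dom ↔ ∃ q : ℚ, Encodable.encode q = m ∧ (q : ℝ) < α :=
    Set.ext_iff.1 hc m
  rw [mem_iUnion_stage_iff]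
  constructor
  · rintro ⟨m, hm, hle⟩
    obtain ⟨q, rfl, hq⟩ := (hdom m).1 hm
    exact ((rightEndLe_encode_iff σ q).1 hle).trans_lt hq
  · intro hσ
    obtain ⟨q, hσq, hqα⟩ := exists_rat_btwn (Set.mem_ofPred_eq ▸ hσ)
    exact ⟨_, (hdom _).2 ⟨q, rfl, hqα⟩, (rightEndLe_encode_iff σ q).2 hσq.le⟩

theorem iUnion_stage_not_rightEndLe
    (hc : {m | (c.eval O m).Dom} = {m | ∃ q : ℚ, Encodable.encode q = m ∧ α < (q : ℝ)}) :
    ⋃ s, stage (fun σ m => ¬ RightEndLe σ m) O c s = {σ | α < rightEnd σ} := by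
  ext σ
  have hdom (m : ℕ) : (c.eval O m).Dom ↔ ∃ q : ℚ, Encodable.encode q = m ∧ α < (q : ℝ) :=
    Set.ext_iff.1 hc m
  rw [mem_iUnion_stage_iff]
  constructor
  · rintro ⟨m, hm, hnot⟩
    obtain ⟨q, rfl, hq⟩ := (hdom m).1 hm
    exact hq.trans (not_le.1 (mt (rightEndLe_encode_iff σ q).2 hnot))
  · intro hσ
    obtain ⟨q, hαq, hqσ⟩ := exists_rat_btwn (Set.mem_ofPred_eq ▸ hσ)
    exact ⟨_, (hdom _).2 ⟨q, rfl, hαq⟩, mt (rightEndLe_encode_iff σ q).1 hqσ.not_ge⟩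

theorem upClosed_stage_rightEndLe (O : ℕ → ℕ) (c : CodeO) (s : ℕ) :
    UpClosed (stage RightEndLe O c s) :=
  fun _ ⟨m, hm, hc, hle⟩ _ hpre => ⟨m, hm, hc, hle.of_prefix hpre⟩

theorem muR_cyl_minimalStrings_stage (h0 : 0 ≤ α) (h1 : α ≤ 1)
    (hc : {m | (c.eval O m).Dom} = {m | ∃ q : ℚ, Encodable.encode q = m ∧ (q : ℝ) < α}) :
    muR (cyl (minimalStrings {σ | σ ∈ stage RightEndLe O c σ.length})) = α := by
  rw [cyl_minimalStrings, cyl_diagonal_eq_cyl_iUnion (monotone_stage _ O c)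
    (upClosed_stage_rightEndLe O c), iUnion_stage_rightEndLe hc]
  exact muR_cyl_eq_of_rightEnd h0 h1 subset_rfl fun _ => le_of_lt (α := ℝ)

theorem muR_cyl_settledExtensions_stage (h0 : 0 ≤ α) (h1 : α ≤ 1)
    (hc : {m | (c.eval O m).Dom} = {m | ∃ q : ℚ, Encodable.encode q = m ∧ α < (q : ℝ)}) :
    muR (cyl (settledExtensions (stage (fun σ m => ¬ RightEndLe σ m) O c))) = α := by
  have hcompl : {σ | α < rightEnd σ}ᶜ = {σ | rightEnd σ ≤ α} := by
    ext σ
    exact not_lt (a := α)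
  rw [cyl_settledExtensions (monotone_stage _ O c), iUnion_stage_not_rightEndLe hc, hcompl]
  exact muR_cyl_eq_of_rightEnd h0 h1 (fun _ => le_of_lt (α := ℝ)) subset_rfl

end DedekindCuts

/-- **Measures of arithmetical classes, converse (effective Kraft–Chaitin).**
For `n > 0`: from a `∅^(n-1)`-c.e. index `c` of the left (resp. right) Dedekind cut of a
real `α ∈ [0,1]`, one can effectively compute a `Σ^0_n` index `g c` of a prefix-free set
of strings of measure exactly `α` (resp. a `Π^0_n` prefix-free set of measure `α`). -/
theorem measures_of_arithmetical_classes_converse (n : ℕ) (hn : 0 < n) :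
    (∃ g : CodeO → CodeO,
      (∃ f : ℕ → ℕ, Computable f ∧ ∀ c : CodeO, f c.encode = (g c).encode) ∧
      ∀ (c : CodeO) (α : ℝ), 0 ≤ α → α ≤ 1 →
        {m | ((c.eval (iterJump (n - 1))) m).Dom} =
            {m | ∃ q : ℚ, Encodable.encode q = m ∧ (q : ℝ) < α} →
        SigmaStr n {σ : List Bool | Encodable.encode σ ∈ SigmaNumIdx (n - 1) (g c)} ∧
        IsPrefixFree {σ : List Bool | Encodable.encode σ ∈ SigmaNumIdx (n - 1) (g c)} ∧
        muR (cyl {σ : List Bool | Encodable.encode σ ∈ SigmaNumIdx (n - 1) (g c)}) = α) ∧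
    (∃ g : CodeO → CodeO,
      (∃ f : ℕ → ℕ, Computable f ∧ ∀ c : CodeO, f c.encode = (g c).encode) ∧
      ∀ (c : CodeO) (β : ℝ), 0 ≤ β → β ≤ 1 →
        {m | ((c.eval (iterJump (n - 1))) m).Dom} =
            {m | ∃ q : ℚ, Encodable.encode q = m ∧ β < (q : ℝ)} →
        PiStr n {σ : List Bool | Encodable.encode σ ∉ SigmaNumIdx (n - 1) (g c)} ∧
        IsPrefixFree {σ : List Bool | Encodable.encode σ ∉ SigmaNumIdx (n - 1) (g c)} ∧
        muR (cyl {σ : List Bool | Encodable.encode σ ∉ SigmaNumIdx (n - 1) (g c)}) = β) := by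
  obtain ⟨g, hg, hS⟩ :=
    exists_primrec_sigmaNumIdx_eq_minimalStrings (n - 1) primrecRel_rightEndLe
  obtain ⟨g', hg', hS'⟩ :=
    exists_primrec_sigmaNumIdx_eq_compl_settledExtensions (n - 1) primrecRel_rightEndLe.not
  refine ⟨⟨g, exists_computable_encode hg, fun c α h0 h1 hc => ?_⟩,
    ⟨g', exists_computable_encode hg', fun c β h0 h1 hc => ?_⟩⟩
  · simp only [hS c, encode_mem_strCodes_iff, Set.ofPred_mem_eq]
    exact ⟨⟨g c, (hS c).symm⟩, isPrefixFree_minimalStrings _, muR_cyl_minimalStrings_stage h0 h1 hc⟩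
  · simp only [hS' c, encode_mem_strCodes_iff, Set.mem_compl_iff, not_not, Set.ofPred_mem_eq]
    exact ⟨⟨g' c, (hS' c).symm⟩, isPrefixFree_settledExtensions,
      muR_cyl_settledExtensions_stage h0 h1 hc⟩

end RandProb
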